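/- For every n ≥ 1 and every binary head tree T with n leaves: the position head(T) has no incoming arc in arcs(T), every position j ≠ head(T) has exactly one incoming arc in arcs(T), and the resulting function bht2dep(T) is a dependency tree on n words whose root is head(T). -/

import Mathlib

/-- Binary head trees (BHTs). -/
inductive BHT : Type where
  | leaf : BHT
  | nodeL (l r : BHT) : BHT
  | nodeR (l r : BHT) : BHT

/-- Number of leaves of a BHT. -/
def BHT.numLeaves : BHT → ℕ
  | .leaf => 1
  | .nodeL l r => l.numLeaves + r.numLeaves
  | .nodeR l r => l.numLeaves + r.numLeaves

/-- Head position of a BHT whose span of leaf positions starts at `i`. -/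
def BHT.headAt : BHT → ℕ → ℕ
  | .leaf, i => i
  | .nodeL l _, i => l.headAt i
  | .nodeR l r, i => r.headAt (i + l.numLeaves)

/-- Head position of a BHT placed over positions `0, …, numLeaves - 1`. -/
def BHT.head (T : BHT) : ℕ := T.headAt 0

/-- Arc set of a BHT whose span of leaf positions starts at `i`. -/
def BHT.arcsAt : BHT → ℕ → Set (ℕ × ℕ)
  | .leaf, _ => ∅
  | .nodeL l r, i =>
      insert (l.headAt i, r.headAt (i + l.numLeaves)) (l.arcsAt i ∪ r.arcsAt (i + l.numLeaves))
  | .nodeR l r, i =>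
      insert (r.headAt (i + l.numLeaves), l.headAt i) (l.arcsAt i ∪ r.arcsAt (i + l.numLeaves))

/-- Arc set of a BHT placed over positions `0, …, numLeaves - 1`. -/
def BHT.arcs (T : BHT) : Set (ℕ × ℕ) := T.arcsAt 0

/-- `S` is a subtree of `T` (placed over positions `0, …, numLeaves - 1`) whose
leaf span starts at absolute position `i`. -/
inductive BHT.SubtreeAt : BHT → ℕ → BHT → Prop
  | refl (T : BHT) : BHT.SubtreeAt T 0 T
  | inlL (l r S : BHT) (i : ℕ) : BHT.SubtreeAt l i S → BHT.SubtreeAt (BHT.nodeL l r) i S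
  | inrL (l r S : BHT) (i : ℕ) :
      BHT.SubtreeAt r i S → BHT.SubtreeAt (BHT.nodeL l r) (l.numLeaves + i) S
  | inlR (l r S : BHT) (i : ℕ) : BHT.SubtreeAt l i S → BHT.SubtreeAt (BHT.nodeR l r) i S
  | inrR (l r S : BHT) (i : ℕ) :
      BHT.SubtreeAt r i S → BHT.SubtreeAt (BHT.nodeR l r) (l.numLeaves + i) S

/-- `bht2dep T j = some i` if `i` is the unique position with `(i, j) ∈ arcs T`,
and `none` if `j` has no incoming arc. -/
noncomputable def bht2dep (n : ℕ) (T : BHT) : Fin n → Option (Fin n) := fun j =>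
  letI := Classical.dec (∃! i : Fin n, ((i : ℕ), (j : ℕ)) ∈ T.arcs)
  if h : ∃! i : Fin n, ((i : ℕ), (j : ℕ)) ∈ T.arcs then some h.choose else none

/-- `head` is a dependency tree on `n` words: exactly one root (position with
`head r = none`), and every position reaches the root by iterating `head`. -/
def IsDepTree {n : ℕ} (head : Fin n → Option (Fin n)) : Prop :=
  ∃ r : Fin n, head r = none ∧ (∀ r' : Fin n, head r' = none → r' = r) ∧
    ∀ j : Fin n, Relation.ReflTransGen (fun a b => head a = some b) j r

/-- A dependency tree is projective if every position's set of descendants is an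
interval of consecutive positions. -/
def Projective {n : ℕ} (head : Fin n → Option (Fin n)) : Prop :=
  ∀ i : Fin n, ∃ a b : Fin n,
    ∀ j : Fin n, Relation.ReflTransGen (fun x y => head x = some y) j i ↔ (a ≤ j ∧ j ≤ b)

/-- The six hexatags: `tL`/`tR` are terminal tags (leaf that is a left/right child);
`leftL`/`leftR` are `⇐L`/`⇐R` (internal left child with head-label L/R);
`rightL`/`rightR` are `⇒L`/`⇒R` (internal right child with head-label L/R). -/
inductive Hexatag : Type where
  | tL | tR | leftL | leftR | rightL | rightR
deriving DecidableEq

/-- A hexatag is terminal if it is `tL` or `tR`. -/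
def Hexatag.isTerminal : Hexatag → Prop
  | .tL => True
  | .tR => True
  | _ => False

/-- In-order linearization; the Boolean records whether the current subtree is a
right child of its parent (the root counts as a left child by convention). -/
def BHT.hexatagsAux : BHT → Bool → List Hexatag
  | .leaf, false => [.tL]
  | .leaf, true => [.tR]
  | .nodeL l r, b =>
      l.hexatagsAux false ++ (if b then Hexatag.rightL else Hexatag.leftL) :: r.hexatagsAux true
  | .nodeR l r, b =>
      l.hexatagsAux false ++ (if b then Hexatag.rightR else Hexatag.leftR) :: r.hexatagsAux true

/-- The hexatag linearization of a BHT. -/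
def BHT.hexatags (T : BHT) : List Hexatag := T.hexatagsAux false

/-- The tags emitted for the leaves of a BHT, in left-to-right order. -/
def BHT.leafTagsAux : BHT → Bool → List Hexatag
  | .leaf, false => [.tL]
  | .leaf, true => [.tR]
  | .nodeL l r, _ => l.leafTagsAux false ++ r.leafTagsAux true
  | .nodeR l r, _ => l.leafTagsAux false ++ r.leafTagsAux true

/-- The tags emitted for the leaves of a BHT in left-to-right order (root
counts as a left child by convention). -/
def BHT.leafTags (T : BHT) : List Hexatag := T.leafTagsAux false

/-- Partial BHTs: binary head trees possibly containing a dummy placeholder. -/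
inductive PBHT : Type where
  | dummy : PBHT
  | leaf : PBHT
  | nodeL (l r : PBHT) : PBHT
  | nodeR (l r : PBHT) : PBHT
deriving DecidableEq

/-- Does a partial BHT contain a dummy? -/
def PBHT.hasDummy : PBHT → Bool
  | .dummy => true
  | .leaf => false
  | .nodeL l r => l.hasDummy || r.hasDummy
  | .nodeR l r => l.hasDummy || r.hasDummy

/-- Substitute `u` for the dummy in a partial BHT. -/
def PBHT.subst : PBHT → PBHT → PBHT
  | .dummy, u => u
  | .leaf, _ => .leaf
  | .nodeL l r, u => .nodeL (l.subst u) (r.subst u)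
  | .nodeR l r, u => .nodeR (l.subst u) (r.subst u)

/-- One step of the left-corner decoder on a stack of partial BHTs. -/
def hexStep : List PBHT → Hexatag → Option (List PBHT)
  | st, .tL => some (.leaf :: st)
  | t :: st, .tR => if t.hasDummy then some (t.subst .leaf :: st) else none
  | t :: st, .leftL => some (.nodeL t .dummy :: st)
  | t :: st, .leftR => some (.nodeR t .dummy :: st)
  | t :: u :: st, .rightL =>
      if u.hasDummy then some (u.subst (.nodeL t .dummy) :: st) else none
  | t :: u :: st, .rightR =>
      if u.hasDummy then some (u.subst (.nodeR t .dummy) :: st) else none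
  | _, _ => none

/-- The left-corner decoder: run the stack operations; succeed iff every
operation is defined and the final stack is a single dummy-free tree. -/
def tags2bht (τ : List Hexatag) : Option PBHT :=
  match τ.foldlM hexStep ([] : List PBHT) with
  | some [t] => if t.hasDummy then none else some t
  | _ => none

/-- Embedding of BHTs into partial BHTs. -/
def BHT.toPBHT : BHT → PBHT
  | .leaf => .leaf
  | .nodeL l r => .nodeL l.toPBHT r.toPBHT
  | .nodeR l r => .nodeR l.toPBHT r.toPBHT

/-- Stack-count increment of a hexatag. -/
def Hexatag.delta : Hexatag → ℤ
  | .tL => 1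
  | .tR => 0
  | .leftL => 0
  | .leftR => 0
  | .rightL => -1
  | .rightR => -1

/-- Running stack count `sₖ` after the first `k` tags of `τ`. -/
def stackCount (τ : List Hexatag) (k : ℕ) : ℤ :=
  ((τ.take k).map Hexatag.delta).sum

/-- Validity of a hexatag list (0-indexed: Lean index `k` is 1-indexed position `k+1`). -/
def ValidTags (τ : List Hexatag) : Prop :=
  (τ.length % 2 = 1 ∧
    ∀ k : ℕ, ∀ t : Hexatag, τ[k]? = some t →
      (k % 2 = 0 → t.isTerminal) ∧ (k % 2 = 1 → ¬ t.isTerminal)) ∧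
  τ[0]? = some Hexatag.tL ∧
  (∀ k : ℕ, ∀ t : Hexatag, τ[k]? = some t →
    (t = Hexatag.rightL ∨ t = Hexatag.rightR) → 2 ≤ stackCount τ k) ∧
  stackCount τ τ.length = 1

/-!
Joining two trees with disjoint vertex sets by an arc between their roots gives a tree again, rooted
at the source of the new arc. Every internal node of a binary head tree performs such a join on the
two consecutive intervals spanned by its children, so by induction the arcs of a BHT form a tree
spanning its positions and rooted at its head; the labels L and R only decide which of the two roots
survives.
-/

/-- `A` is the arc set of a directed tree with vertex set `s`, rooted at `r`. An arc `(i, j)` points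
from the head `i` to its dependent `j`, i.e. away from the root. -/
structure IsArborescence {α : Type*} (A : Set (α × α)) (s : Set α) (r : α) : Prop where
  root_mem : r ∈ s
  subset_prod : A ⊆ s ×ˢ s
  root_notMem : ∀ i, (i, r) ∉ A
  leftUnique : Relator.LeftUnique fun i j => (i, j) ∈ A
  reaches_root : ∀ j ∈ s, Relation.ReflTransGen (fun a b => (b, a) ∈ A) j r

namespace IsArborescence

section

variable {α : Type*} {A B : Set (α × α)} {s t : Set α} {a b r j : α}

theorem singleton (r : α) : IsArborescence ∅ {r} r where
  root_mem := rfl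
  subset_prod := Set.empty_subset _
  root_notMem _ := Set.notMem_empty _
  leftUnique _ _ _ h := h.elim
  reaches_root := by
    rintro _ rfl
    exact .refl

theorem notMem_of_target_notMem (hA : IsArborescence A s r) (hj : j ∉ s) (i : α) : (i, j) ∉ A :=
  fun h => hj (hA.subset_prod h).2

theorem join (hA : IsArborescence A s a) (hB : IsArborescence B t b) (hst : Disjoint s t) :
    IsArborescence (insert (a, b) (A ∪ B)) (s ∪ t) a where
  root_mem := .inl hA.root_mem
  subset_prod := by
    have hAB : A ∪ B ⊆ (s ∪ t) ×ˢ (s ∪ t) := Set.union_subset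
      (hA.subset_prod.trans (Set.prod_mono Set.subset_union_left Set.subset_union_left))
      (hB.subset_prod.trans (Set.prod_mono Set.subset_union_right Set.subset_union_right))
    exact Set.insert_subset ⟨.inl hA.root_mem, .inr hB.root_mem⟩ hAB
  root_notMem i := by
    have hat : a ∉ t := hst.notMem_of_mem_left hA.root_mem
    rintro (h | h | h)
    · obtain ⟨-, rfl⟩ := Prod.mk.inj h
      exact hat hB.root_mem
    · exact hA.root_notMem i h
    · exact hB.notMem_of_target_notMem hat i h
  leftUnique := by
    have hbs : b ∉ s := hst.notMem_of_mem_right hB.root_mem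
    have not_both {i i' j : α} (h : (i, j) ∈ A) (h' : (i', j) ∈ B) : False :=
      hst.notMem_of_mem_left (hA.subset_prod h).2 (hB.subset_prod h').2
    have eq_of_target_eq_root {i : α} (h : (i, b) ∈ insert (a, b) (A ∪ B)) : i = a := by
      rcases h with h | h | h
      · exact congrArg Prod.fst h
      · exact (hA.notMem_of_target_notMem hbs i h).elim
      · exact (hB.root_notMem i h).elim
    intro i i' j h h'
    rcases eq_or_ne j b with rfl | hj
    · exact (eq_of_target_eq_root h).trans (eq_of_target_eq_root h').symm
    · have hne (k : α) : (k, j) ≠ (a, b) := fun h => hj (congrArg Prod.snd h)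
      rcases h.resolve_left (hne i), h'.resolve_left (hne i') with ⟨h | h, h' | h'⟩
      · exact hA.leftUnique h h'
      · exact (not_both h h').elim
      · exact (not_both h' h).elim
      · exact hB.leftUnique h h'
  reaches_root j := by
    rintro (hj | hj)
    · exact Relation.ReflTransGen.mono (fun _ _ h => .inr (.inl h)) _ _ (hA.reaches_root j hj)
    · have hjb : Relation.ReflTransGen (fun x y => (y, x) ∈ insert (a, b) (A ∪ B)) j b :=
        Relation.ReflTransGen.mono (fun _ _ h => .inr (.inr h)) _ _ (hB.reaches_root j hj)
      exact hjb.tail (Set.mem_insert _ _)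

theorem existsUnique_arc (hA : IsArborescence A s r) (hj : j ∈ s) (hne : j ≠ r) :
    ∃! i, (i, j) ∈ A := by
  obtain ⟨i, hij, -⟩ := (hA.reaches_root j hj).cases_head.resolve_left hne
  exact ⟨i, hij, fun _ hk => hA.leftUnique hk hij⟩

end

section

variable {n : ℕ} {A : Set (ℕ × ℕ)} {r : Fin n} {head : Fin n → Option (Fin n)}

theorem apply_root_eq_none {s : Set ℕ} (hA : IsArborescence A s r)
    (hhead : ∀ i j : Fin n, head j = some i ↔ ((i : ℕ), (j : ℕ)) ∈ A) : head r = none :=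
  Option.eq_none_iff_forall_ne_some.2 fun i hi => hA.root_notMem i ((hhead i r).1 hi)

theorem isDepTree (hA : IsArborescence A (Set.Iio n) r)
    (hhead : ∀ i j : Fin n, head j = some i ↔ ((i : ℕ), (j : ℕ)) ∈ A) : IsDepTree head := by
  refine ⟨r, hA.apply_root_eq_none hhead, fun j hj => ?_, fun j => ?_⟩
  · by_contra hne
    obtain ⟨i, hij, -⟩ := hA.existsUnique_arc j.isLt (Fin.val_ne_of_ne hne)
    have hi : head j = some ⟨i, (hA.subset_prod hij).1⟩ := (hhead _ j).2 hij
    simp [hj] at hi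
  · suffices ∀ k : ℕ, Relation.ReflTransGen (fun a b => (b, a) ∈ A) k r → ∀ hk : k < n,
        Relation.ReflTransGen (fun a b => head a = some b) ⟨k, hk⟩ r from
      this j (hA.reaches_root j j.isLt) j.isLt
    intro k hkr
    induction hkr using Relation.ReflTransGen.head_induction_on with
    | refl => exact fun _ => .refl
    | head hkm _ ih =>
      intro hk
      have hm := (hA.subset_prod hkm).1
      exact .head ((hhead ⟨_, hm⟩ ⟨_, hk⟩).2 hkm) (ih hm)

end

end IsArborescence

namespace BHT

theorem isArborescence_arcsAt (T : BHT) (i : ℕ) :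
    IsArborescence (T.arcsAt i) (Set.Ico i (i + T.numLeaves)) (T.headAt i) := by
  have Ico_union (l r : BHT) (i : ℕ) :
      Set.Ico i (i + l.numLeaves) ∪ Set.Ico (i + l.numLeaves) (i + l.numLeaves + r.numLeaves) =
        Set.Ico i (i + (l.numLeaves + r.numLeaves)) := by
    rw [Set.Ico_union_Ico_eq_Ico (Nat.le_add_right _ _) (Nat.le_add_right _ _), add_assoc]
  induction T generalizing i with
  | leaf =>
    rw [numLeaves, Set.Ico_add_one_right_eq_Icc, Set.Icc_self]
    exact .singleton i
  | nodeL l r ihl ihr =>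
    have h := (ihl i).join (ihr (i + l.numLeaves)) Set.Ico_disjoint_Ico_same
    rwa [Ico_union] at h
  | nodeR l r ihl ihr =>
    have h := (ihr (i + l.numLeaves)).join (ihl i) Set.Ico_disjoint_Ico_same.symm
    rwa [Set.union_comm (r.arcsAt _), Set.union_comm (Set.Ico _ _), Ico_union] at h

theorem isArborescence_arcs (T : BHT) : IsArborescence T.arcs (Set.Iio T.numLeaves) T.head := by
  have h := T.isArborescence_arcsAt 0
  rwa [zero_add, ← Nat.bot_eq_zero, Set.Ico_bot] at h

end BHT

theorem bht2dep_eq_some_iff {n : ℕ} {T : BHT} {i j : Fin n} :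
    bht2dep n T j = some i ↔ ((i : ℕ), (j : ℕ)) ∈ T.arcs := by
  unfold bht2dep
  split_ifs with h
  · rw [Option.some_inj]
    exact ⟨fun hi => hi ▸ h.choose_spec.1, fun hij => h.unique h.choose_spec.1 hij⟩
  · refine iff_of_false nofun fun hij => h ⟨i, hij, fun k hkj => ?_⟩
    exact Fin.ext (T.isArborescence_arcs.leftUnique hkj hij)

theorem bht2dep_isDepTree (n : ℕ) (hn : 1 ≤ n) (T : BHT) (hT : T.numLeaves = n) :
    ∃ r : Fin n, (r : ℕ) = T.head ∧
      (∀ i : ℕ, (i, (r : ℕ)) ∉ T.arcs) ∧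
      (∀ j : Fin n, j ≠ r → ∃! i : ℕ, (i, (j : ℕ)) ∈ T.arcs) ∧
      IsDepTree (bht2dep n T) ∧ bht2dep n T r = none := by
  subst hT
  let r : Fin T.numLeaves := ⟨T.head, T.isArborescence_arcs.root_mem⟩
  have hA : IsArborescence T.arcs (Set.Iio T.numLeaves) r := T.isArborescence_arcs
  have hhead (i j : Fin T.numLeaves) : bht2dep _ T j = some i ↔ ((i : ℕ), (j : ℕ)) ∈ T.arcs :=
    bht2dep_eq_some_iff
  exact ⟨r, rfl, hA.root_notMem, fun j hj => hA.existsUnique_arc j.isLt (Fin.val_ne_of_ne hj),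
    hA.isDepTree hhead, hA.apply_root_eq_none hhead⟩
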